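/- Let Z be a real Banach space with a Schauder basis (z_i)_{i≥0} consisting of norm-one vectors such that the partial sums ∑_{i=1}^{k} z_i, k ≥ 1, are uniformly bounded in norm, and let (z_i*) ⊆ Z* be the biorthogonal coordinate functionals. Let (α_j)_{j≥1} be a strictly increasing sequence of positive reals with limit 1, let (β_j)_{j≥1} be a strictly increasing sequence of positive reals with limit ∞, and let (ℕ_j)_{j≥1} be pairwise disjoint infinite subsets of ℕ. Let A ⊆ Z* be the convex hull of the set { α_j z_0* + β_j z_k* : j ≥ 1, k ∈ ℕ_j }. Then z_0* does not belong to the weak* derived set A^(1); in particular, since z_0* lies in the norm closure of A^(1), the set A^(1) is strictly contained in the weak* closure of A. -/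

import Mathlib

open NormedSpace

/-- The weak* derived set of a subset of the dual. -/
noncomputable def wStarDerived {X : Type*} [NormedAddCommGroup X] [NormedSpace ℝ X]
    (A : Set (StrongDual ℝ X)) : Set (StrongDual ℝ X) :=
  ⋃ n : ℕ, {f : StrongDual ℝ X |
    StrongDual.toWeakDual f ∈ closure (StrongDual.toWeakDual '' (A ∩ {g : StrongDual ℝ X | ‖g‖ ≤ n}))}

/-- The weak* closure. -/
noncomputable def wStarClosure {X : Type*} [NormedAddCommGroup X] [NormedSpace ℝ X]
    (A : Set (StrongDual ℝ X)) : Set (StrongDual ℝ X) :=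
  {f : StrongDual ℝ X | StrongDual.toWeakDual f ∈ closure (StrongDual.toWeakDual '' A)}

/-- Quasi-reflexivity. -/
def QuasiReflexive (X : Type*) [NormedAddCommGroup X] [NormedSpace ℝ X] : Prop :=
  FiniteDimensional ℝ
    (StrongDual ℝ (StrongDual ℝ X) ⧸ LinearMap.range ((inclusionInDoubleDual ℝ X) : X →ₗ[ℝ] StrongDual ℝ (StrongDual ℝ X)))

/-- Restriction map to a subspace. -/
noncomputable def restrictMap {X : Type*} [NormedAddCommGroup X] [NormedSpace ℝ X]
    (Z : Submodule ℝ X) (f : StrongDual ℝ X) : StrongDual ℝ Z :=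
  f.comp Z.subtypeL

/-!
To keep `z₀*` out of `A^(1)`, look for a vector at which `z₀*` exceeds every bounded part of `A`.
The functionals `α_j z₀* + β_j z_k*` take the value `α_j < 1` at `z₀` and, for large `K`, the value
`β_j` at `S_K = z₁ + ⋯ + z_K`. Since `β_j → ∞`, for each `c` a large multiple `b (1 - α_j)` makes up
for the finitely many `β_j < c`, so every generator `f` satisfies `f (S_K) + b (1 - f z₀) ≥ c`
eventually in `K`; this condition is convex in `f`, so it holds on all of `A`. If moreover
`‖f‖ ≤ n`, then `f (S_K) ≤ n M` with `M = sup ‖S_K‖`, hence taking `c = n M + 1` gives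
`f (b z₀) ≤ b - 1 < b = z₀* (b z₀)`.

On the other hand `z_k* → 0` weak*, because the terms of a convergent expansion tend to zero. So
`α_j z₀* ∈ A^(1)` for every `j`, and `α_j z₀* → z₀*` in norm.
-/

section

open Filter Topology

variable {X : Type*} [NormedAddCommGroup X] [NormedSpace ℝ X]

theorem wStarDerived_subset_wStarClosure (A : Set (StrongDual ℝ X)) :
    wStarDerived A ⊆ wStarClosure A :=
  Set.iUnion_subset fun _ _ hf =>
    closure_mono (X := WeakDual ℝ X) (Set.image_mono Set.inter_subset_left) hf

theorem isClosed_wStarClosure (A : Set (StrongDual ℝ X)) : IsClosed (wStarClosure A) :=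
  isClosed_closure.preimage Dual.toWeakDual_continuous

theorem mem_wStarDerived_of_frequently_of_tendsto_of_norm_le {ι : Type*} {l : Filter ι}
    {A : Set (StrongDual ℝ X)} {f : ι → StrongDual ℝ X} {g : StrongDual ℝ X} {C : ℝ}
    (hA : ∃ᶠ i in l, f i ∈ A) (hlim : ∀ x, Tendsto (fun i => f i x) l (𝓝 (g x)))
    (hC : ∀ i, ‖f i‖ ≤ C) : g ∈ wStarDerived A := by
  obtain ⟨n, hn⟩ := exists_nat_ge C
  have hweak : Tendsto (fun i => StrongDual.toWeakDual (f i)) l (𝓝 (StrongDual.toWeakDual g)) :=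
    tendsto_iff_forall_eval_tendsto_topDualPairing.2 hlim
  have hball : ∃ᶠ i in l, StrongDual.toWeakDual (f i) ∈
      StrongDual.toWeakDual '' (A ∩ {h | ‖h‖ ≤ n}) :=
    hA.mono fun i hi => Set.mem_image_of_mem _ ⟨hi, (hC i).trans hn⟩
  exact Set.mem_iUnion.2 ⟨n, (hweak.frequently hball).mem_closure⟩

theorem notMem_wStarDerived_of_forall_exists_lt {A : Set (StrongDual ℝ X)} {g : StrongDual ℝ X}
    (h : ∀ n : ℕ, ∃ x : X, ∃ c < g x, ∀ f ∈ A, ‖f‖ ≤ n → f x ≤ c) : g ∉ wStarDerived A := by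
  intro hg
  obtain ⟨n, hn⟩ := Set.mem_iUnion.1 hg
  obtain ⟨x, c, hc, hle⟩ := h n
  have hclosed : IsClosed {f : WeakDual ℝ X | f x ≤ c} :=
    isClosed_le (WeakDual.eval_continuous x) continuous_const
  have hsub : StrongDual.toWeakDual '' (A ∩ {f | ‖f‖ ≤ n}) ⊆ {f : WeakDual ℝ X | f x ≤ c} :=
    Set.image_subset_iff.2 fun f hf => hle f hf.1 hf.2
  exact hc.not_ge (closure_minimal hsub hclosed hn)

theorem eventually_le_apply_of_mem_convexHull {κ : Type*} {l : Filter κ}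
    {s : Set (StrongDual ℝ X)} {y : κ → X} {c : ℝ}
    (hs : ∀ f ∈ s, ∀ᶠ K in l, c ≤ f (y K)) {f : StrongDual ℝ X} (hf : f ∈ convexHull ℝ s) :
    ∀ᶠ K in l, c ≤ f (y K) := by
  have hconv : Convex ℝ {f : StrongDual ℝ X | ∀ᶠ K in l, c ≤ f (y K)} := by
    intro f hf g hg a b ha hb hab
    filter_upwards [hf, hg] with K hfK hgK
    exact convex_Ici c hfK hgK ha hb hab
  exact convexHull_min hs hconv hf

theorem notMem_wStarDerived_convexHull {κ : Type*} {l : Filter κ} {s : Set (StrongDual ℝ X)}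
    {g : StrongDual ℝ X} {x₀ : X} {y : κ → X} {M : ℝ} (hg : g x₀ = 1)
    (hy : ∃ᶠ K in l, ‖y K‖ ≤ M)
    (hs : ∀ c : ℝ, ∃ b : ℝ, ∀ f ∈ s, ∀ᶠ K in l, c ≤ b * (1 - f x₀) + f (y K)) :
    g ∉ wStarDerived (convexHull ℝ s) := by
  refine notMem_wStarDerived_of_forall_exists_lt fun n => ?_
  obtain ⟨b, hb⟩ := hs (n * M + 1)
  have hgen : ∀ f ∈ s, ∀ᶠ K in l, n * M + 1 - b ≤ f (y K - b • x₀) := fun f hf => by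
    filter_upwards [hb f hf] with K hK
    rw [map_sub, map_smul, smul_eq_mul]
    linarith
  refine ⟨b • x₀, b - 1, by simp [hg], fun f hf hfn => ?_⟩
  obtain ⟨K, hyK, hK⟩ := (hy.and_eventually (eventually_le_apply_of_mem_convexHull hgen hf)).exists
  have hfy : f (y K) ≤ n * M := (le_abs_self _).trans (f.le_of_opNorm_le_of_le hfn hyK)
  rw [map_sub] at hK
  linarith

theorem exists_forall_le_mul_one_sub_add {ι : Type*} {α β : ι → ℝ} (hα : ∀ j, α j < 1)
    (hβ : Tendsto β cofinite atTop) (c : ℝ) : ∃ b : ℝ, ∀ j, c ≤ b * (1 - α j) + β j := by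
  have hfin : {j | ¬c ≤ β j}.Finite := hβ.eventually_ge_atTop c
  have hlarge (j : ι) : ∀ᶠ b : ℝ in atTop, c ≤ b * (1 - α j) + β j :=
    (tendsto_atTop_add_const_right _ _
      (tendsto_id.atTop_mul_const (sub_pos.2 (hα j)))).eventually_ge_atTop c
  obtain ⟨b, hb, hb0⟩ :=
    (((eventually_all_finite hfin).2 fun j _ => hlarge j).and (eventually_ge_atTop 0)).exists
  refine ⟨b, fun j => ?_⟩
  by_cases hj : c ≤ β j
  · exact hj.trans (le_add_of_nonneg_left (mul_nonneg hb0 (sub_pos.2 (hα j)).le))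
  · exact hb j hj

theorem apply_sum_of_biorthogonal {ι R E : Type*} [DecidableEq ι] [Semiring R] [TopologicalSpace R]
    [AddCommMonoid E] [TopologicalSpace E] [Module R E] {z : ι → E} {zstar : ι → StrongDual R E}
    (hbi : ∀ i j, zstar i (z j) = if i = j then 1 else 0) (i : ι) (t : Finset ι) :
    zstar i (∑ j ∈ t, z j) = if i ∈ t then 1 else 0 := by
  simp only [map_sum, hbi, Finset.sum_ite_eq]

theorem tendsto_coeff_zero_of_tendsto_sum {𝕜 E : Type*} [NormedField 𝕜]
    [SeminormedAddCommGroup E] [NormedSpace 𝕜 E] {z : ℕ → E} {a : ℕ → 𝕜} {w : E} {δ : ℝ}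
    (hδ : 0 < δ) (hz : ∀ i, δ ≤ ‖z i‖)
    (hw : Tendsto (fun k => ∑ i ∈ Finset.range k, a i • z i) atTop (𝓝 w)) :
    Tendsto a atTop (𝓝 0) := by
  have hterm : Tendsto (fun k => a k • z k) atTop (𝓝 0) := by
    simpa [Finset.sum_range_succ] using (hw.comp (tendsto_add_atTop_nat 1)).sub hw
  refine squeeze_zero_norm (a := fun k => δ⁻¹ * ‖a k • z k‖) (fun k => ?_)
    (by simpa using hterm.norm.const_mul δ⁻¹)
  rw [norm_smul, le_inv_mul_iff₀ hδ, mul_comm]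
  gcongr
  exact hz k

theorem exists_norm_le_of_forall_tendsto {𝕜 E F : Type*} [NontriviallyNormedField 𝕜]
    [SeminormedAddCommGroup E] [NormedSpace 𝕜 E] [CompleteSpace E] [SeminormedAddCommGroup F]
    [NormedSpace 𝕜 F] {f : ℕ → E →L[𝕜] F} {g : E → F}
    (hf : ∀ x, Tendsto (fun n => f n x) atTop (𝓝 (g x))) : ∃ C, ∀ n, ‖f n‖ ≤ C :=
  banach_steinhaus fun x => (hf x).norm.bddAbove_range.imp fun _ hC n => hC ⟨n, rfl⟩

theorem mem_wStarDerived_of_frequently_of_tendsto [CompleteSpace X] {A : Set (StrongDual ℝ X)}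
    {f : ℕ → StrongDual ℝ X} {g : StrongDual ℝ X} (hA : ∃ᶠ k in atTop, f k ∈ A)
    (hlim : ∀ x, Tendsto (fun k => f k x) atTop (𝓝 (g x))) : g ∈ wStarDerived A := by
  obtain ⟨C, hC⟩ := exists_norm_le_of_forall_tendsto hlim
  exact mem_wStarDerived_of_frequently_of_tendsto_of_norm_le hA hlim hC

theorem mem_closure_wStarDerived_of_smul_add_smul_mem [CompleteSpace X] {A : Set (StrongDual ℝ X)}
    {g : StrongDual ℝ X} {f : ℕ → StrongDual ℝ X} {α β : ℕ → ℝ} {N : ℕ → Set ℕ}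
    (hf : ∀ x, Tendsto (fun k => f k x) atTop (𝓝 0)) (hα : Tendsto α atTop (𝓝 1))
    (hN : ∀ j, (N j).Infinite) (hA : ∀ j, ∀ k ∈ N j, α j • g + β j • f k ∈ A) :
    g ∈ closure (wStarDerived A) := by
  have hweak (j : ℕ) (x : X) :
      Tendsto (fun k => (α j • g + β j • f k) x) atTop (𝓝 ((α j • g) x)) := by
    simpa using ((hf x).const_mul (β j)).const_add ((α j • g) x)
  have hmem (j : ℕ) : α j • g ∈ wStarDerived A :=
    mem_wStarDerived_of_frequently_of_tendsto
      ((Nat.frequently_atTop_iff_infinite.2 (hN j)).mono (hA j)) (hweak j)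
  have hlim : Tendsto (fun j => α j • g) atTop (𝓝 g) := by
    simpa using hα.smul_const g
  exact mem_closure_of_tendsto hlim (Eventually.of_forall hmem)

theorem coord_zero_notMem_wStarDerived_convexHull {z : ℕ → X} {zstar : ℕ → StrongDual ℝ X}
    (hbi : ∀ i j, zstar i (z j) = if i = j then 1 else 0) {M : ℝ}
    (hM : ∃ᶠ K in atTop, ‖∑ i ∈ Finset.Icc 1 K, z i‖ ≤ M)
    {ι : Type*} {α β : ι → ℝ} (hα : ∀ j, α j < 1) (hβ : Tendsto β cofinite atTop)
    {N : ι → Set ℕ} (hN : ∀ j, 0 ∉ N j) :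
    zstar 0 ∉ wStarDerived
      (convexHull ℝ {f | ∃ j k, k ∈ N j ∧ f = α j • zstar 0 + β j • zstar k}) := by
  refine notMem_wStarDerived_convexHull (x₀ := z 0) (by simp [hbi]) hM fun c => ?_
  obtain ⟨b, hb⟩ := exists_forall_le_mul_one_sub_add hα hβ c
  refine ⟨b, ?_⟩
  rintro _ ⟨j, k, hk, rfl⟩
  have hk0 : k ≠ 0 := ne_of_mem_of_not_mem hk (hN j)
  filter_upwards [eventually_ge_atTop k] with K hK
  have hz₀ : (α j • zstar 0 + β j • zstar k) (z 0) = α j := by simp [hbi, hk0]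
  have hsum : (α j • zstar 0 + β j • zstar k) (∑ i ∈ Finset.Icc 1 K, z i) = β j := by
    simp [-map_sum, apply_sum_of_biorthogonal hbi, Nat.one_le_iff_ne_zero, hk0, hK]
  rw [hz₀, hsum]
  exact hb j

theorem stmt11_general {Z : Type*} [NormedAddCommGroup Z] [NormedSpace ℝ Z] [CompleteSpace Z]
    {z : ℕ → Z} {zstar : ℕ → StrongDual ℝ Z}
    (hbi : ∀ i j, zstar i (z j) = if i = j then 1 else 0)
    (hexp : ∀ w : Z, Tendsto (fun k => ∑ i ∈ Finset.range k, zstar i w • z i) atTop (𝓝 w))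
    {δ : ℝ} (hδ : 0 < δ) (hz : ∀ i, δ ≤ ‖z i‖)
    (hps : ∃ M : ℝ, ∀ k : ℕ, 1 ≤ k → ‖∑ i ∈ Finset.Icc 1 k, z i‖ ≤ M)
    {α β : ℕ → ℝ} (hαlt : ∀ j, α j < 1) (hα : Tendsto α atTop (𝓝 1)) (hβ : Tendsto β atTop atTop)
    {N : ℕ → Set ℕ} (hNinf : ∀ j, (N j).Infinite) (hN0 : ∀ j, 0 ∉ N j)
    {A : Set (StrongDual ℝ Z)}
    (hA : A = convexHull ℝ {f | ∃ j k : ℕ, k ∈ N j ∧ f = α j • zstar 0 + β j • zstar k}) :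
    zstar 0 ∉ wStarDerived A ∧ zstar 0 ∈ closure (wStarDerived A) ∧
      wStarDerived A ⊂ wStarClosure A := by
  obtain ⟨M, hM⟩ := hps
  have hnot : zstar 0 ∉ wStarDerived A :=
    hA ▸ coord_zero_notMem_wStarDerived_convexHull hbi
      ((eventually_ge_atTop 1).mono hM).frequently hαlt (Nat.cofinite_eq_atTop ▸ hβ) hN0
  have hgen : ∀ j, ∀ k ∈ N j, α j • zstar 0 + β j • zstar k ∈ A := fun j k hk =>
    hA ▸ subset_convexHull ℝ _ ⟨j, k, hk, rfl⟩
  have hclosure : zstar 0 ∈ closure (wStarDerived A) :=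
    mem_closure_wStarDerived_of_smul_add_smul_mem
      (fun w => tendsto_coeff_zero_of_tendsto_sum hδ hz (hexp w)) hα hNinf hgen
  have hsub := wStarDerived_subset_wStarClosure A
  exact ⟨hnot, hclosure, (Set.ssubset_iff_of_subset hsub).2
    ⟨zstar 0, closure_minimal hsub (isClosed_wStarClosure A) hclosure, hnot⟩⟩

end

/-- In the setting of the construction of Theorem 2: $z_0^*$ does not belong to the weak*
derived set $A^{(1)}$; moreover $z_0^*$ lies in the norm closure of $A^{(1)}$, and hence
$A^{(1)}$ is strictly contained in the weak* closure of $A$. -/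
theorem stmt11 (Z : Type*) [NormedAddCommGroup Z] [NormedSpace ℝ Z] [CompleteSpace Z]
    (z : ℕ → Z) (zstar : ℕ → StrongDual ℝ Z)
    (hbi : ∀ i j, zstar i (z j) = if i = j then 1 else 0)
    (hexp : ∀ w : Z, Filter.Tendsto (fun k => ∑ i ∈ Finset.range k, zstar i w • z i)
      Filter.atTop (nhds w))
    (hnorm : ∀ i, ‖z i‖ = 1)
    (hps : ∃ M : ℝ, ∀ k : ℕ, 1 ≤ k → ‖∑ i ∈ Finset.Icc 1 k, z i‖ ≤ M)
    (α β : ℕ → ℝ)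
    (hαmono : StrictMono α) (hαpos : ∀ j, 0 < α j)
    (hα1 : Filter.Tendsto α Filter.atTop (nhds 1))
    (hβmono : StrictMono β) (hβpos : ∀ j, 0 < β j)
    (hβ : Filter.Tendsto β Filter.atTop Filter.atTop)
    (N : ℕ → Set ℕ) (hNdisj : Pairwise (Function.onFun Disjoint N))
    (hNinf : ∀ j, (N j).Infinite) (hN0 : ∀ j, 0 ∉ N j)
    (A : Set (StrongDual ℝ Z))
    (hA : A = convexHull ℝ
      {f : StrongDual ℝ Z | ∃ j k : ℕ, k ∈ N j ∧ f = α j • zstar 0 + β j • zstar k}) :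
    zstar 0 ∉ wStarDerived A ∧
    zstar 0 ∈ closure (wStarDerived A) ∧
    wStarDerived A ⊂ wStarClosure A :=
  stmt11_general hbi hexp one_pos (fun i => (hnorm i).ge) hps
    (fun j => (hαmono j.lt_succ_self).trans_le (hαmono.monotone.ge_of_tendsto hα1 _))
    hα1 hβ hNinf hN0 hA
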